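/- Let n ≥ 1 be an integer and let m_1, …, m_{2n} be positive integers. Then the type-m matrix P(m) is a reduced matrix: writing P(m) = !![a,b;c,d], we have 0 < a ≤ c < d. -/

import Mathlib

/-!
Left multiplication by `T^t * U^s` sends the rows `(a, b)`, `(c, d)` to
`(a', b') = (a + s c, b + s d)`
and `(c + t a', d + t b')`. Reducedness `0 < a ≤ c < d` alone is not visibly preserved, because
`c + t a' < d + t b'` also requires control of `b`. Adding the inequality `a ≤ b` makes the condition
inductive: `a ≤ b` and `c < d` give `a' ≤ b'`, whence the strict inequality in the bottom row.
The case of one block is `!![1, s; t, t s + 1]`, so induction on the number of blocks concludes.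
-/

open Matrix

/-- The matrix `T = !![1,0;1,1]` acting on the numerical Grothendieck group. -/
def Tmat : Matrix (Fin 2) (Fin 2) ℤ := !![1, 0; 1, 1]

/-- The matrix `U = !![1,1;0,1]`. -/
def Umat : Matrix (Fin 2) (Fin 2) ℤ := !![1, 1; 0, 1]

/-- The type-`m` matrix
`P(m) = T^{m_{2n}} * U^{m_{2n-1}} * T^{m_{2n-2}} * U^{m_{2n-3}} * ⋯ * T^{m_2} * U^{m_1}`. -/
def typeM (n : ℕ) (m : ℕ → ℕ) : Matrix (Fin 2) (Fin 2) ℤ :=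
  ((List.range n).map (fun i => Tmat ^ m (2 * (n - i)) * Umat ^ m (2 * (n - i) - 1))).prod

/-- Peeling off the leftmost block `T^{m_{2n+2}} * U^{m_{2n+1}}`. -/
lemma typeM_succ (n : ℕ) (m : ℕ → ℕ) :
    typeM (n + 1) m = Tmat ^ m (2 * n + 2) * Umat ^ m (2 * n + 1) * typeM n m := by
  simp [typeM, List.range_succ_eq_map, List.map_map, Function.comp_def, mul_add]

lemma Tmat_pow (t : ℕ) : Tmat ^ t = !![1, 0; (t : ℤ), 1] := by
  induction t with
  | zero => simp [Matrix.one_fin_two]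
  | succ t ih => rw [pow_succ, ih]; simp [Tmat]

lemma Umat_pow (s : ℕ) : Umat ^ s = !![1, (s : ℤ); 0, 1] := by
  induction s with
  | zero => simp [Matrix.one_fin_two]
  | succ s ih => rw [pow_succ, ih]; simp [Umat, add_comm]

/-- Reducedness strengthened by `a ≤ b`, which makes it stable under left multiplication by
`T^t * U^s`. -/
lemma typeM_invariant (m : ℕ → ℕ) (n : ℕ) (hn : 1 ≤ n)
    (hm : ∀ i, 1 ≤ i → i ≤ 2 * n → 0 < m i) :
    0 < typeM n m 0 0 ∧ typeM n m 0 0 ≤ typeM n m 1 0 ∧ typeM n m 1 0 < typeM n m 1 1 ∧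
      typeM n m 0 0 ≤ typeM n m 0 1 := by
  induction n, hn using Nat.le_induction with
  | base =>
    have h1 : (1 : ℤ) ≤ m 1 := by exact_mod_cast hm 1 (by omega) (by omega)
    have h2 : (1 : ℤ) ≤ m 2 := by exact_mod_cast hm 2 (by omega) (by omega)
    have h0 : typeM 0 m = 1 := by simp [typeM]
    rw [typeM_succ, h0, Tmat_pow, Umat_pow]
    simp
    refine ⟨by omega, by nlinarith, by omega⟩
  | succ n hn ih =>
    obtain ⟨ha, hac, hcd, hab⟩ := ih fun i h1 h2 => hm i h1 (by omega)
    have hs : (1 : ℤ) ≤ m (2 * n + 1) := by exact_mod_cast hm _ (by omega) (by omega)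
    have ht : (1 : ℤ) ≤ m (2 * n + 2) := by exact_mod_cast hm _ (by omega) (by omega)
    rw [typeM_succ, Tmat_pow, Umat_pow]
    simp only [Matrix.mul_apply, Fin.sum_univ_two, Matrix.of_apply, Matrix.cons_val',
      Matrix.cons_val_zero, Matrix.cons_val_one, Matrix.cons_val_fin_one]
    generalize typeM n m 0 0 = a at *
    generalize typeM n m 0 1 = b at *
    generalize typeM n m 1 0 = c at *
    generalize typeM n m 1 1 = d at *
    generalize (m (2 * n + 1) : ℤ) = s at *
    generalize (m (2 * n + 2) : ℤ) = t at *
    -- The new top row is `(a + s c, b + s d)`; the bottom row gains `t` times it.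
    have hsc : 0 < s * c := mul_pos (by omega) (by omega)
    have htop : a + s * c ≤ b + s * d := by nlinarith
    have hta : a + s * c ≤ t * (a + s * c) := by nlinarith
    have htt : t * (a + s * c) ≤ t * (b + s * d) :=
      mul_le_mul_of_nonneg_left htop (by omega)
    refine ⟨?_, ?_, ?_, ?_⟩ <;> ring_nf at * <;> linarith

theorem typeM_is_reduced (n : ℕ) (hn : 1 ≤ n) (m : ℕ → ℕ)
    (hm : ∀ i, 1 ≤ i → i ≤ 2 * n → 0 < m i) :
    0 < typeM n m 0 0 ∧ typeM n m 0 0 ≤ typeM n m 1 0 ∧ typeM n m 1 0 < typeM n m 1 1 := by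
  obtain ⟨ha, hac, hcd, -⟩ := typeM_invariant m n hn hm
  exact ⟨ha, hac, hcd⟩
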